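/- arXiv:1005.0729 — 4 statements merged into one kernel-verified Lean document; each statement's English description precedes it below -/
import Mathlib

section
/- Let N ≥ 2 be an integer and K, κ, γ, θ, δ, A be real constants with A > 0 standing for α(N). Let a : ℝ → ℝ be twice continuously differentiable with a(t) > 0, let f : [0,∞) → ℝ be continuously differentiable with f > 0, and set ρ(t,r) = f(r/a(t))/a(t)^N, V(t,r) = (a'(t)/a(t))·r. Then for all t and all r > 0, writing z = r/a(t), the left-hand side of the radial momentum equation satisfies the reduction identity: ρ(V_t + V V_r) + ∂_r(K ρ^γ) − κ ∂_r(ρ^θ)·(((N−1)/r)V + V_r) − κ ρ^θ·(V_rr + ((N−1)/r)V_r − ((N−1)/r²)V) + δ ρ·(A/r^{N−1})·∫₀^r ρ(t,s)s^{N−1} ds = (ρ(t,r)/a(t)^{N−1})·[ a''(t)·a(t)^{N−2}·r + γK·f(z)^{γ−2}·f'(z)/a(t)^{N(γ−2)+2} − κθN·a'(t)·f(z)^{θ−2}·f'(z)/a(t)^{N(θ−2)+3} + (δA/z^{N−1})·∫₀^z f(s)s^{N−1} ds ]. -/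
/-- Reduction identity for the left-hand side of the radial momentum equation of the
Navier-Stokes-Poisson equations under the separable ansatz
ρ(t,r) = f(r/a(t))/a(t)^N, V(t,r) = (a'(t)/a(t))·r (powers of the positive density
and of a(t) with real exponents are real powers). -/
theorem stmt_5 (N : ℕ) (hN : 2 ≤ N) (K κ γ θ δ A : ℝ) (hA : 0 < A)
    (a : ℝ → ℝ) (ha : ContDiff ℝ 2 a) (hapos : ∀ t, 0 < a t)
    (f : ℝ → ℝ) (hf : ContDiffOn ℝ 1 f (Set.Ici 0))
    (hfpos : ∀ z ∈ Set.Ici (0:ℝ), 0 < f z)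
    (ρ V : ℝ → ℝ → ℝ)
    (hρ : ∀ t r, ρ t r = f (r / a t) / (a t) ^ N)
    (hV : ∀ t r, V t r = (deriv a t / a t) * r) :
    ∀ t : ℝ, ∀ r : ℝ, 0 < r →
      ρ t r * (deriv (fun τ => V τ r) t + V t r * deriv (fun s => V t s) r)
        + deriv (fun s => K * ρ t s ^ γ) r
        - κ * deriv (fun s => ρ t s ^ θ) r
            * (((N : ℝ) - 1) / r * V t r + deriv (fun s => V t s) r)
        - κ * ρ t r ^ θ
            * (deriv (deriv (fun s => V t s)) r
              + ((N : ℝ) - 1) / r * deriv (fun s => V t s) r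
              - ((N : ℝ) - 1) / r ^ 2 * V t r)
        + δ * ρ t r * (A / r ^ (N - 1)) * ∫ s in (0:ℝ)..r, ρ t s * s ^ (N - 1)
      = (ρ t r / (a t) ^ (N - 1)) *
          (deriv (deriv a) t * (a t) ^ (N - 2) * r
            + γ * K * f (r / a t) ^ (γ - 2) * deriv f (r / a t)
                / (a t) ^ ((N : ℝ) * (γ - 2) + 2)
            - κ * θ * (N : ℝ) * deriv a t * f (r / a t) ^ (θ - 2) * deriv f (r / a t)
                / (a t) ^ ((N : ℝ) * (θ - 2) + 3)
            + (δ * A / (r / a t) ^ (N - 1))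
                * ∫ s in (0:ℝ)..(r / a t), f s * s ^ (N - 1)) := by
  intro t r hr
  obtain ⟨M, rfl⟩ := Nat.exists_eq_add_of_le hN
  have hat : 0 < a t := hapos t
  have hz : 0 < r / a t := div_pos hr hat
  have hfz : 0 < f (r / a t) := hfpos _ hz.le
  have hfd : DifferentiableAt ℝ f (r / a t) :=
    (hf.differentiableOn (by norm_num)).differentiableAt (Ici_mem_nhds hz)
  have hρd : HasDerivAt (fun s => ρ t s)
      (deriv f (r / a t) * (1 / a t) / (a t) ^ (2 + M)) r := by
    have h1 : HasDerivAt (fun s : ℝ => s / a t) (1 / a t) r := (hasDerivAt_id r).div_const _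
    have h2 : HasDerivAt (fun s : ℝ => f (s / a t)) (deriv f (r / a t) * (1 / a t)) r :=
      HasDerivAt.comp r hfd.hasDerivAt h1
    have h3 := h2.div_const ((a t) ^ (2 + M))
    simpa only [hρ] using h3
  have hρpos : 0 < ρ t r := by rw [hρ]; positivity
  have hpow : ∀ p : ℝ, deriv (fun s => ρ t s ^ p) r =
      p * (ρ t r * (f (r / a t) ^ (p - 2) / (a t) ^ (((2 + M : ℕ) : ℝ) * (p - 2))))
        * (deriv f (r / a t) * (1 / a t) / (a t) ^ (2 + M)) := by
    intro p
    have h := (hρd.rpow_const (p := p) (Or.inl hρpos.ne')).deriv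
    rw [h]
    have e : ρ t r ^ (p - 1) =
        ρ t r * (f (r / a t) ^ (p - 2) / (a t) ^ (((2 + M : ℕ) : ℝ) * (p - 2))) := by
      rw [show p - 1 = 1 + (p - 2) by ring, Real.rpow_add hρpos, Real.rpow_one]
      congr 1
      rw [hρ, Real.div_rpow hfz.le (by positivity), Real.rpow_mul hat.le, Real.rpow_natCast]
    rw [e]; ring
  have hKd : deriv (fun s => K * ρ t s ^ γ) r = K * deriv (fun s => ρ t s ^ γ) r :=
    deriv_const_mul _ ((hρd.rpow_const (p := γ) (Or.inl hρpos.ne')).differentiableAt)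
  have hVr : deriv (fun s => V t s) = fun _ => deriv a t / a t := by
    funext s
    simp only [hV]
    simpa using ((hasDerivAt_id s).const_mul (deriv a t / a t)).deriv
  have ha1 : HasDerivAt a (deriv a t) t := (ha.differentiable (by norm_num) t).hasDerivAt
  have ha2 : HasDerivAt (deriv a) (deriv (deriv a) t) t := by
    have : ContDiff ℝ 1 (deriv a) := by
      have h : ContDiff ℝ (1 + 1) a := by simpa [one_add_one_eq_two] using ha
      exact (contDiff_succ_iff_deriv.1 h).2.2
    exact (this.differentiable (by norm_num) t).hasDerivAt
  have hVt : deriv (fun τ => V τ r) t =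
      (deriv (deriv a) t * a t - deriv a t * deriv a t) / (a t) ^ 2 * r := by
    simp only [hV]
    exact ((ha2.div ha1 hat.ne').mul_const r).deriv
  have hI : ∫ s in (0:ℝ)..r, ρ t s * s ^ (2 + M - 1) =
      ∫ s in (0:ℝ)..(r / a t), f s * s ^ (2 + M - 1) := by
    have h := intervalIntegral.integral_comp_div (a := 0) (b := r)
      (fun u => f u * u ^ (2 + M - 1)) hat.ne'
    rw [zero_div, smul_eq_mul] at h
    have h' : ∀ s, ρ t s * s ^ (2 + M - 1) =
        (a t)⁻¹ * (f (s / a t) * (s / a t) ^ (2 + M - 1)) := by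
      intro s
      rw [hρ, show 2 + M - 1 = M + 1 by omega, show 2 + M = M + 1 + 1 by omega, div_pow]
      field_simp
      ring
    simp only [h']
    rw [intervalIntegral.integral_const_mul, h, inv_mul_cancel_left₀ hat.ne']
  rw [hI, hVt, hKd, hpow, hpow, hVr]
  rw [Real.rpow_add hat, Real.rpow_add hat, hV]
  rw [show (a t) ^ (2:ℝ) = (a t) ^ 2 by norm_cast, show (a t) ^ (3:ℝ) = (a t) ^ 3 by norm_cast]
  have hP1 := Real.rpow_pos_of_pos hat (((2 + M : ℕ) : ℝ) * (γ - 2))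
  have hP2 := Real.rpow_pos_of_pos hat (((2 + M : ℕ) : ℝ) * (θ - 2))
  generalize (a t) ^ (((2 + M : ℕ) : ℝ) * (γ - 2)) = P1 at *
  generalize (a t) ^ (((2 + M : ℕ) : ℝ) * (θ - 2)) = P2 at *
  generalize f (r / a t) ^ (γ - 2) = F1 at *
  generalize f (r / a t) ^ (θ - 2) = F2 at *
  generalize ρ t r ^ θ = R at *
  generalize (∫ s in (0:ℝ)..(r / a t), f s * s ^ (2 + M - 1)) = J at *
  generalize deriv f (r / a t) = f' at *
  generalize ρ t r = q at *
  generalize deriv (deriv a) t = a2 at *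
  generalize deriv a t = a1 at *
  generalize a t = b at *
  rw [show 2 + M - 1 = M + 1 by omega, show 2 + M - 2 = M by omega, div_pow]
  simp only [deriv_const]
  push_cast
  field_simp
  ring
end

section
/- Let N ≥ 2 be an integer, K, κ, δ, α, m real constants and n > 0, with γ = (2N−2)/N and θ = (2N−3)/N, and let A > 0 stand for α(N). Let Z > 0 and let f : [0,Z) → ℝ be continuously differentiable with f > 0 and f(0) = α > 0, satisfying for all z ∈ (0,Z) the ordinary differential equation γK·f(z)^{γ−2}·f'(z) − mκθN·f(z)^{θ−2}·f'(z) + (δA/z^{N−1})·∫₀^z f(s)s^{N−1} ds = 0. Define a(t) = mt + n, ρ(t,r) = f(r/a(t))/a(t)^N and V(t,r) = (m/a(t))·r. Then for every t with a(t) > 0 and every r with 0 < r < a(t)·Z, the pair (ρ, V) satisfies both the radial mass equation ρ_t + Vρ_r + ρV_r + ((N−1)/r)ρV = 0 and the radial momentum equation ρ(V_t + V V_r) + ∂_r(Kρ^γ) + δρ·(A/r^{N−1})·∫₀^r ρ(t,s)s^{N−1} ds = κ∂_r(ρ^θ)·(((N−1)/r)V + V_r) + κρ^θ·(V_rr + ((N−1)/r)V_r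 − ((N−1)/r²)V). -/
/-- Theorem 1 (1a): with Λ = 0, γ = (2N−2)/N, θ = (2N−3)/N and a(t) = mt + n, the
separable pair ρ(t,r) = f(r/a(t))/a(t)^N, V(t,r) = (m/a(t))·r solves the radial
mass and momentum equations of the Navier-Stokes-Poisson system, provided f solves
the stated ordinary differential equation. -/
theorem stmt_6 (N : ℕ) (hN : 2 ≤ N) (K κ δ α m n A γ θ Z : ℝ)
    (hn : 0 < n) (hA : 0 < A) (hZ : 0 < Z) (hα : 0 < α)
    (hγ : γ = (2 * (N : ℝ) - 2) / N) (hθ : θ = (2 * (N : ℝ) - 3) / N)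
    (f : ℝ → ℝ) (hf : ContDiffOn ℝ 1 f (Set.Ico 0 Z))
    (hfpos : ∀ z ∈ Set.Ico (0:ℝ) Z, 0 < f z) (hf0 : f 0 = α)
    (hode : ∀ z ∈ Set.Ioo (0:ℝ) Z,
      γ * K * f z ^ (γ - 2) * deriv f z
        - m * κ * θ * (N : ℝ) * f z ^ (θ - 2) * deriv f z
        + (δ * A / z ^ (N - 1)) * ∫ s in (0:ℝ)..z, f s * s ^ (N - 1) = 0)
    (a : ℝ → ℝ) (ha : ∀ t, a t = m * t + n)
    (ρ V : ℝ → ℝ → ℝ)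
    (hρ : ∀ t r, ρ t r = f (r / a t) / (a t) ^ N)
    (hV : ∀ t r, V t r = (m / a t) * r) :
    ∀ t : ℝ, 0 < a t → ∀ r : ℝ, 0 < r → r < a t * Z →
      (deriv (fun τ => ρ τ r) t + V t r * deriv (fun s => ρ t s) r
          + ρ t r * deriv (fun s => V t s) r
          + ((N : ℝ) - 1) / r * (ρ t r * V t r) = 0)
      ∧ (ρ t r * (deriv (fun τ => V τ r) t + V t r * deriv (fun s => V t s) r)
          + deriv (fun s => K * ρ t s ^ γ) r
          + δ * ρ t r * (A / r ^ (N - 1)) * ∫ s in (0:ℝ)..r, ρ t s * s ^ (N - 1)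
        = κ * deriv (fun s => ρ t s ^ θ) r
              * (((N : ℝ) - 1) / r * V t r + deriv (fun s => V t s) r)
          + κ * ρ t r ^ θ
              * (deriv (deriv (fun s => V t s)) r
                + ((N : ℝ) - 1) / r * deriv (fun s => V t s) r
                - ((N : ℝ) - 1) / r ^ 2 * V t r)) := by
  intro t ht r hr hrZ
  have hN0 : (N : ℝ) ≠ 0 := by positivity
  obtain ⟨b, hb⟩ : ∃ b, b = a t := ⟨_, rfl⟩
  rw [← hb] at ht hrZ
  have hb0 : b ≠ 0 := ht.ne'
  obtain ⟨z, hz⟩ : ∃ z, z = r / b := ⟨_, rfl⟩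
  have hrz : r = b * z := by rw [hz]; field_simp
  have hz0 : 0 < z := by rw [hz]; positivity
  have hzZ : z < Z := by rw [hz, div_lt_iff₀ ht]; linarith
  have hc : 0 < f z := hfpos z ⟨hz0.le, hzZ⟩
  have hd : HasDerivAt f (deriv f z) z := by
    apply DifferentiableAt.hasDerivAt
    exact (hf.differentiableOn (by norm_num)).differentiableAt (Ico_mem_nhds hz0 hzZ)
  have hat : HasDerivAt a m t := by
    have : a = fun t => m * t + n := funext ha
    rw [this]
    simpa using ((hasDerivAt_id t).const_mul m).add_const n
  have hVr : (fun s => V t s) = fun s => (m / b) * s := by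
    funext s; rw [hV, hb]
  have hVd : deriv (fun s => (m / b) * s) = fun _ => m / b := by
    funext s
    simpa using ((hasDerivAt_id s).const_mul (m / b)).deriv
  have hVt : HasDerivAt (fun τ => V τ r) (-(m * m / b ^ 2) * r) t := by
    have h1 : (fun τ => V τ r) = fun τ => (m / a τ) * r := funext fun τ => hV τ r
    rw [h1]
    have h2 := (((hasDerivAt_const t m).div hat (by rw [← hb]; exact hb0))).mul_const r
    refine HasDerivAt.congr_deriv h2 ?_
    rw [← hb]; ring
  have hρr : HasDerivAt (fun s => ρ t s) (deriv f z / b ^ (N + 1)) r := by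
    have h1 : (fun s => ρ t s) = fun s => f (s / b) / b ^ N := by
      funext s; rw [hρ, hb]
    rw [h1]
    have h3 : HasDerivAt (fun s : ℝ => s / b) (1 / b) r := (hasDerivAt_id r).div_const b
    have h4 : HasDerivAt f (deriv f z) (r / b) := by rw [← hz]; exact hd
    have h2 := (h4.comp r h3).div_const (b ^ N)
    refine HasDerivAt.congr_deriv h2 ?_
    rw [pow_succ]; field_simp
  have hρt : HasDerivAt (fun τ => ρ τ r)
      (deriv f z * (-(r * m) / b ^ 2) / b ^ N - N * m * f z / b ^ (N + 1)) t := by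
    have h1 : (fun τ => ρ τ r) = fun τ => f (r / a τ) / a τ ^ N := funext fun τ => hρ τ r
    rw [h1]
    have hat0 : a t ≠ 0 := by rw [← hb]; exact hb0
    have h3 : HasDerivAt (fun τ => r / a τ) ((0 * a t - r * m) / a t ^ 2) t :=
      (hasDerivAt_const t r).div hat hat0
    have h4 : HasDerivAt f (deriv f z) (r / a t) := by rw [← hb, ← hz]; exact hd
    have h2 := (h4.comp t h3).div (hat.pow N) (pow_ne_zero N hat0)
    refine HasDerivAt.congr_deriv h2 ?_
    obtain ⟨M, rfl⟩ : ∃ M, N = M + 1 := ⟨N - 1, by omega⟩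
    simp only [Function.comp, Pi.pow_apply, ← hb, ← hz, Nat.add_sub_cancel]
    push_cast
    field_simp
    ring
  have hρv : ρ t r = f z / b ^ N := by rw [hρ, ← hb, ← hz]
  have hρpos : 0 < ρ t r := by rw [hρv]; positivity
  have hI : ∫ s in (0:ℝ)..r, ρ t s * s ^ (N - 1)
      = ∫ s in (0:ℝ)..z, f s * s ^ (N - 1) := by
    have h1 : (fun s => ρ t s * s ^ (N - 1))
        = fun s => b⁻¹ * (fun u => f u * u ^ (N - 1)) (s / b) := by
      funext s
      obtain ⟨M, rfl⟩ : ∃ M, N = M + 1 := ⟨N - 1, by omega⟩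
      simp only [hρ, ← hb, Nat.add_sub_cancel, div_pow, pow_succ]
      field_simp
    rw [h1, intervalIntegral.integral_const_mul, intervalIntegral.integral_comp_div (fun u => f u * u ^ (N - 1)) hb0,
      zero_div, ← hz, smul_eq_mul, inv_mul_cancel_left₀ hb0]
  have hpow : ∀ e : ℝ, HasDerivAt (fun s => ρ t s ^ e)
      (deriv f z / b ^ (N + 1) * e * ρ t r ^ (e - 1)) r := fun e =>
    hρr.rpow_const (Or.inl hρpos.ne')
  have hsplit : ∀ e : ℝ, ρ t r ^ (e - 1) = f z * f z ^ (e - 2) / b ^ ((N : ℝ) * (e - 1)) := by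
    intro e
    rw [hρv, Real.div_rpow hc.le (by positivity), ← Real.rpow_natCast b N, ← Real.rpow_mul ht.le]
    congr 1
    rw [show e - 1 = 1 + (e - 2) by ring, Real.rpow_add hc, Real.rpow_one]
  have hg : b ^ ((N : ℝ) * (γ - 1)) = b ^ N / b ^ 2 := by
    rw [show (N : ℝ) * (γ - 1) = (N : ℝ) - (2 : ℕ) by rw [hγ]; push_cast; field_simp; ring,
      Real.rpow_sub ht, Real.rpow_natCast, Real.rpow_natCast]
  have hh : b ^ ((N : ℝ) * (θ - 1)) = b ^ N / b ^ 3 := by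
    rw [show (N : ℝ) * (θ - 1) = (N : ℝ) - (3 : ℕ) by rw [hθ]; push_cast; field_simp; ring,
      Real.rpow_sub ht, Real.rpow_natCast, Real.rpow_natCast]
  have hO := hode z ⟨hz0, hzZ⟩
  constructor
  · rw [hρt.deriv, hρr.deriv, hVr, hVd, hρv, hV, ← hb, hrz, pow_succ]
    field_simp
    ring
  · rw [((hpow γ).const_mul K).deriv, (hpow θ).deriv, hVt.deriv, hVr, hVd, hsplit, hsplit, hg, hh,
      hI, hρv, hV, ← hb, deriv_const]
    generalize (f z / b ^ N) ^ θ = X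
    generalize (∫ s in (0:ℝ)..z, f s * s ^ (N - 1)) = I at hO ⊢
    generalize f z ^ (γ - 2) = G at hO ⊢
    generalize f z ^ (θ - 2) = H at hO ⊢
    generalize deriv f z = D at hO ⊢
    generalize f z = c at hO ⊢
    rw [hrz, mul_pow]
    clear hsplit hg hh
    obtain ⟨M, rfl⟩ : ∃ M, N = M + 1 := ⟨N - 1, by omega⟩
    rw [Nat.add_sub_cancel] at *
    have e1 : ∀ L R : ℝ, L - R = c / (b ^ (M + 1) * b ^ M) * (γ * K * G * D
        - m * κ * θ * ((M + 1 : ℕ) : ℝ) * H * D + δ * A / z ^ M * I) → L = R := by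
      intro L R h
      rw [hO, mul_zero] at h
      linarith
    apply e1
    push_cast
    field_simp
    ring
end

section
/- Let N ≥ 2 be an integer, K, κ, δ, α, m real constants and n > 0, with γ = (2N−2)/N and θ = (3N−4)/(2N), and let A > 0 stand for α(N). Let Z > 0 and let f : [0,Z) → ℝ be continuously differentiable with f > 0 and f(0) = α > 0, satisfying for all z ∈ (0,Z) the ordinary differential equation γK·f(z)^{γ−2}·f'(z) − 2mκθ·f(z)^{θ−2}·f'(z) + (δA/z^{N−1})·∫₀^z f(s)s^{N−1} ds = (2(N−2)m²/N²)·z. Define a(t) = (mt + n)^{2/N}, ρ(t,r) = f(r/a(t))/a(t)^N and V(t,r) = (a'(t)/a(t))·r. Then for every t with mt + n > 0 and every r with 0 < r < a(t)·Z, the pair (ρ, V) satisfies both the radial mass equation ρ_t + Vρ_r + ρV_r + ((N−1)/r)ρV = 0 and the radial momentum equation ρ(V_t + V V_r) + ∂_r(Kρ^γ) + δρ·(A/r^{N−1})·∫₀^r ρ(t,s)s^{N−1} ds = κ∂_r(ρ^θ)·(((N−1)/r)V + V_r) + κρ^θ·(V_rr + ((N−1)/r)V_r − ((N−1)/r²)V).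 -/
/-- Theorem 1 (1b): with Λ = 0, γ = (2N−2)/N, θ = (3N−4)/(2N) and a(t) = (mt + n)^{2/N},
the separable pair ρ(t,r) = f(r/a(t))/a(t)^N, V(t,r) = (a'(t)/a(t))·r solves the radial
mass and momentum equations of the Navier-Stokes-Poisson system, provided f solves
the stated ordinary differential equation. -/
theorem stmt_7 (N : ℕ) (hN : 2 ≤ N) (K κ δ α m n A γ θ Z : ℝ)
    (hn : 0 < n) (hA : 0 < A) (hZ : 0 < Z) (hα : 0 < α)
    (hγ : γ = (2 * (N : ℝ) - 2) / N) (hθ : θ = (3 * (N : ℝ) - 4) / (2 * N))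
    (f : ℝ → ℝ) (hf : ContDiffOn ℝ 1 f (Set.Ico 0 Z))
    (hfpos : ∀ z ∈ Set.Ico (0:ℝ) Z, 0 < f z) (hf0 : f 0 = α)
    (hode : ∀ z ∈ Set.Ioo (0:ℝ) Z,
      γ * K * f z ^ (γ - 2) * deriv f z
        - 2 * m * κ * θ * f z ^ (θ - 2) * deriv f z
        + (δ * A / z ^ (N - 1)) * ∫ s in (0:ℝ)..z, f s * s ^ (N - 1)
        = (2 * ((N : ℝ) - 2) * m ^ 2 / (N : ℝ) ^ 2) * z)
    (a : ℝ → ℝ) (ha : ∀ t, a t = (m * t + n) ^ ((2 : ℝ) / N))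
    (ρ V : ℝ → ℝ → ℝ)
    (hρ : ∀ t r, ρ t r = f (r / a t) / (a t) ^ N)
    (hV : ∀ t r, V t r = (deriv a t / a t) * r) :
    ∀ t : ℝ, 0 < m * t + n → ∀ r : ℝ, 0 < r → r < a t * Z →
      (deriv (fun τ => ρ τ r) t + V t r * deriv (fun s => ρ t s) r
          + ρ t r * deriv (fun s => V t s) r
          + ((N : ℝ) - 1) / r * (ρ t r * V t r) = 0)
      ∧ (ρ t r * (deriv (fun τ => V τ r) t + V t r * deriv (fun s => V t s) r)
          + deriv (fun s => K * ρ t s ^ γ) r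
          + δ * ρ t r * (A / r ^ (N - 1)) * ∫ s in (0:ℝ)..r, ρ t s * s ^ (N - 1)
        = κ * deriv (fun s => ρ t s ^ θ) r
              * (((N : ℝ) - 1) / r * V t r + deriv (fun s => V t s) r)
          + κ * ρ t r ^ θ
              * (deriv (deriv (fun s => V t s)) r
                + ((N : ℝ) - 1) / r * deriv (fun s => V t s) r
                - ((N : ℝ) - 1) / r ^ 2 * V t r)) := by
  intro t hu r hr hrZ
  have hN0 : (N : ℝ) ≠ 0 := by positivity
  have hapos : 0 < a t := by rw [ha]; positivity
  have hu_deriv : ∀ τ, HasDerivAt (fun τ => m * τ + n) m τ := by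
    intro τ
    simpa using ((hasDerivAt_id τ).const_mul m).add_const n
  have haf : a = fun t => (m * t + n) ^ ((2 : ℝ) / N) := funext ha
  have hader : ∀ τ, 0 < m * τ + n →
      HasDerivAt a (2 * m / (N * (m * τ + n)) * a τ) τ := by
    intro τ hτ
    have h := (hu_deriv τ).rpow_const (p := (2 : ℝ) / N) (Or.inl hτ.ne')
    rw [← haf] at h
    convert h using 1
    rw [ha, Real.rpow_sub_one hτ.ne']
    field_simp
  have hh : ∀ τ, 0 < m * τ + n → deriv a τ / a τ = 2 * m / (N * (m * τ + n)) := by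
    intro τ hτ
    have : 0 < a τ := by rw [ha]; positivity
    rw [(hader τ hτ).deriv]
    field_simp
  have hev : ∀ᶠ τ in nhds t, 0 < m * τ + n :=
    (hu_deriv t).continuousAt.eventually (lt_mem_nhds hu)
  have haN : a t ^ N = (m * t + n) ^ 2 := by
    rw [ha, ← Real.rpow_natCast, ← Real.rpow_mul hu.le, div_mul_cancel₀ _ hN0]
    exact_mod_cast Real.rpow_natCast _ 2
  -- V derivatives
  have hVr : ∀ s, HasDerivAt (fun s => V t s) (2 * m / (N * (m * t + n))) s := by
    intro s
    have : (fun s => V t s) = fun s => 2 * m / (N * (m * t + n)) * s := by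
      funext s; rw [hV, hh t hu]
    rw [this]
    simpa using (hasDerivAt_id s).const_mul (2 * m / (N * (m * t + n)))
  have hVr' : deriv (fun s => V t s) = fun _ => 2 * m / (N * (m * t + n)) :=
    funext fun s => (hVr s).deriv
  have hVt : deriv (fun τ => V τ r) t = -(2 * m ^ 2) / (N * (m * t + n) ^ 2) * r := by
    have h1 : (fun τ => V τ r) =ᶠ[nhds t] fun τ => 2 * m / N * (m * τ + n)⁻¹ * r := by
      filter_upwards [hev] with τ hτ
      rw [hV, hh τ hτ]
      field_simp
    rw [h1.deriv_eq]
    have h2 := ((((hu_deriv t).inv hu.ne').const_mul (2 * m / N)).mul_const r).deriv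
    refine Eq.trans h2 ?_
    field_simp
  -- f
  obtain ⟨z, hz⟩ : ∃ z, z = r / a t := ⟨_, rfl⟩
  have hz0 : 0 < z := by rw [hz]; positivity
  have hzZ : z < Z := by rw [hz, div_lt_iff₀ hapos]; linarith
  have hr_eq : r = z * a t := by rw [hz]; field_simp
  have hfz : HasDerivAt f (deriv f z) z := by
    have : ContDiffAt ℝ 1 f z := hf.contDiffAt (Ico_mem_nhds hz0 hzZ)
    exact (this.differentiableAt (by norm_num)).hasDerivAt
  have hF : 0 < f z := hfpos z ⟨hz0.le, hzZ⟩
  have hode' := hode z ⟨hz0, hzZ⟩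
  have hρr : HasDerivAt (fun s => ρ t s) (deriv f z / a t / (m * t + n) ^ 2) r := by
    have : (fun s => ρ t s) = fun s => f (s / a t) / (m * t + n) ^ 2 := by
      funext s; rw [hρ, haN]
    rw [this]
    have h1 : HasDerivAt (fun s => s / a t) (1 / a t) r := (hasDerivAt_id r).div_const _
    have h2 : HasDerivAt f (deriv f z) (r / a t) := hz ▸ hfz
    have h3 := (h2.comp r h1).div_const ((m * t + n) ^ 2)
    exact HasDerivAt.congr_deriv h3 (by ring)
  have hρt : deriv (fun τ => ρ τ r) t =
      -(2 * m / (N * (m * t + n))) * z * deriv f z / (m * t + n) ^ 2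
        - 2 * m * f z / (m * t + n) ^ 3 := by
    have h1 : (fun τ => ρ τ r) =ᶠ[nhds t] fun τ => f (r / a τ) / (m * τ + n) ^ 2 := by
      filter_upwards [hev] with τ hτ
      rw [hρ, ha τ, ← Real.rpow_natCast (_ ^ _) N, ← Real.rpow_mul hτ.le, div_mul_cancel₀ _ hN0]
      congr 1
      exact_mod_cast Real.rpow_natCast _ 2
    rw [h1.deriv_eq]
    have h2 : HasDerivAt f (deriv f z) (r / a t) := hz ▸ hfz
    have h3 := (hasDerivAt_const t r).div (hader t hu) hapos.ne'
    have h4 := (h2.comp t h3).div ((hu_deriv t).pow 2) (pow_pos hu 2).ne'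
    refine Eq.trans h4.deriv ?_
    simp only [Function.comp, Pi.div_apply, Pi.pow_apply, ← hz]
    rw [hr_eq]
    field_simp
    push_cast
    ring
  have hρv : ρ t r = f z / (m * t + n) ^ 2 := by rw [hρ, haN, hz]
  have hρpos : 0 < ρ t r := by rw [hρv]; positivity
  have hVv : V t r = 2 * m / (N * (m * t + n)) * r := by rw [hV, hh t hu]
  have hb2 : a t ^ 2 = (m * t + n) ^ ((4 : ℝ) / N) := by
    rw [ha, ← Real.rpow_natCast, ← Real.rpow_mul hu.le]
    congr 1; push_cast; ring
  have hpow : ∀ p : ℝ, ρ t r ^ p = f z ^ p * (m * t + n) ^ (-2 * p) := by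
    intro p
    rw [hρv, Real.div_rpow hF.le (by positivity), ← Real.rpow_natCast, ← Real.rpow_mul hu.le,
      neg_mul, Real.rpow_neg hu.le, div_eq_mul_inv]
    norm_num
  have hpγ : ρ t r ^ (γ - 1) = ρ t r * (f z ^ (γ - 2) * a t ^ 2) := by
    have : γ - 1 = (γ - 2) + 1 := by ring
    rw [this, Real.rpow_add_one hρpos.ne', hpow, hb2, mul_comm (ρ t r)]
    congr 3
    rw [hγ]; field_simp; ring
  have hpθ : ρ t r ^ (θ - 1) = ρ t r * (f z ^ (θ - 2) * (a t ^ 2 * (m * t + n))) := by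
    have : θ - 1 = (θ - 2) + 1 := by ring
    rw [this, Real.rpow_add_one hρpos.ne', hpow, hb2, mul_comm (ρ t r), ← Real.rpow_add_one hu.ne']
    congr 3
    rw [hθ]; field_simp; ring
  have hPr : deriv (fun s => K * ρ t s ^ γ) r =
      K * (deriv f z / a t / (m * t + n) ^ 2 * γ * ρ t r ^ (γ - 1)) :=
    ((hρr.rpow_const (p := γ) (Or.inl hρpos.ne')).const_mul K).deriv
  have hMr : deriv (fun s => ρ t s ^ θ) r =
      deriv f z / a t / (m * t + n) ^ 2 * θ * ρ t r ^ (θ - 1) :=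
    (hρr.rpow_const (p := θ) (Or.inl hρpos.ne')).deriv
  have hsplit : a t ^ N = a t * a t ^ (N - 1) := by
    rw [← pow_succ', Nat.sub_add_cancel (by omega)]
  have hint : ∫ s in (0:ℝ)..r, ρ t s * s ^ (N - 1) = ∫ s in (0:ℝ)..z, f s * s ^ (N - 1) := by
    have h1 : (fun s => ρ t s * s ^ (N - 1)) =
        fun s => (a t)⁻¹ * ((fun x => f x * x ^ (N - 1)) (s / a t)) := by
      funext s
      simp only [hρ, hsplit, div_pow]
      field_simp
    rw [h1, intervalIntegral.integral_const_mul, intervalIntegral.integral_comp_div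
        (fun x => f x * x ^ (N - 1)) hapos.ne',
      zero_div, ← hz, smul_eq_mul, ← mul_assoc, inv_mul_cancel₀ hapos.ne', one_mul]
  have hrp : A / r ^ (N - 1) = A / z ^ (N - 1) * (a t / (m * t + n) ^ 2) := by
    rw [← haN, hsplit, hr_eq, mul_pow]
    field_simp
  refine ⟨?_, ?_⟩
  · rw [hρt, hρr.deriv, hVr', hVv, hρv, hr_eq]
    field_simp
    ring
  · rw [hPr, hMr, hVt, hVr', hint, hrp, hpγ, hpθ, hVv]
    generalize (∫ s in (0:ℝ)..z, f s * s ^ (N - 1)) = I at *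
    generalize f z ^ (γ - 2) = G at *
    generalize f z ^ (θ - 2) = T at *
    generalize ρ t r ^ θ = R at *
    generalize ρ t r = q at *
    have hz' : δ * q * (A / z ^ (N - 1) * (a t / (m * t + n) ^ 2)) * I =
        q * a t / (m * t + n) ^ 2 * (δ * A / z ^ (N - 1) * I) := by ring
    have hI : δ * A / z ^ (N - 1) * I = (2 * ((N : ℝ) - 2) * m ^ 2 / (N : ℝ) ^ 2) * z
        - (γ * K * G * deriv f z - 2 * m * κ * θ * T * deriv f z) := by linarith
    rw [hz', hI, hr_eq]
    simp only [deriv_const]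
    clear hγ hθ
    field_simp
    ring
end

section
/- Let N ≥ 2 be an integer, K, κ, α real constants, δ = 1 or δ = −1, Λ a real constant with δΛ > 0, γ = θ = (2N−2)/N, and let A > 0 stand for α(N). Set λ = √(δAΛ/N). Let Z > 0 and let f : [0,Z) → ℝ be continuously differentiable with f > 0 and f(0) = α > 0, satisfying for all z ∈ (0,Z) the ordinary differential equation (γK − κθ·√(NδAΛ))·f(z)^{γ−2}·f'(z) + (δA/z^{N−1})·∫₀^z f(s)s^{N−1} ds = 0. Define a(t) = e^{λt}, ρ(t,r) = f(r/a(t))/a(t)^N and V(t,r) = λ·r. Then for every t and every r with 0 < r < a(t)·Z, the pair (ρ, V) satisfies both the radial mass equation ρ_t + Vρ_r + ρV_r + ((N−1)/r)ρV = 0 and the radial momentum equation with background constant Λ: ρ(V_t + V V_r) + ∂_r(Kρ^γ) + δρ·(A/r^{N−1})·∫₀^r (ρ(t,s) − Λ)·s^{N−1} ds = κ∂_r(ρ^θ)·(((N−1)/r)V + V_r) + κρ^θ·(V_rr + ((N−1)/r)V_r − ((N−1)/r²)V). -/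
/-- Theorem 1 (2): with background constant Λ satisfying δΛ > 0, γ = θ = (2N−2)/N and
a(t) = e^{√(δα(N)Λ/N)·t}, the separable pair ρ(t,r) = f(r/a(t))/a(t)^N,
V(t,r) = √(δα(N)Λ/N)·r solves the radial mass and momentum equations of the
Navier-Stokes-Poisson system with background, provided f solves the stated ODE. -/
theorem stmt_8 (N : ℕ) (hN : 2 ≤ N) (K κ α δ Λ A γ θ lam Z : ℝ)
    (hδ : δ = 1 ∨ δ = -1) (hδΛ : 0 < δ * Λ) (hA : 0 < A) (hZ : 0 < Z) (hα : 0 < α)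
    (hγ : γ = (2 * (N : ℝ) - 2) / N) (hθ : θ = (2 * (N : ℝ) - 2) / N)
    (hlam : lam = Real.sqrt (δ * A * Λ / N))
    (f : ℝ → ℝ) (hf : ContDiffOn ℝ 1 f (Set.Ico 0 Z))
    (hfpos : ∀ z ∈ Set.Ico (0:ℝ) Z, 0 < f z) (hf0 : f 0 = α)
    (hode : ∀ z ∈ Set.Ioo (0:ℝ) Z,
      (γ * K - κ * θ * Real.sqrt ((N : ℝ) * δ * A * Λ)) * f z ^ (γ - 2) * deriv f z
        + (δ * A / z ^ (N - 1)) * ∫ s in (0:ℝ)..z, f s * s ^ (N - 1) = 0)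
    (a : ℝ → ℝ) (ha : ∀ t, a t = Real.exp (lam * t))
    (ρ V : ℝ → ℝ → ℝ)
    (hρ : ∀ t r, ρ t r = f (r / a t) / (a t) ^ N)
    (hV : ∀ t r, V t r = lam * r) :
    ∀ t : ℝ, ∀ r : ℝ, 0 < r → r < a t * Z →
      (deriv (fun τ => ρ τ r) t + V t r * deriv (fun s => ρ t s) r
          + ρ t r * deriv (fun s => V t s) r
          + ((N : ℝ) - 1) / r * (ρ t r * V t r) = 0)
      ∧ (ρ t r * (deriv (fun τ => V τ r) t + V t r * deriv (fun s => V t s) r)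
          + deriv (fun s => K * ρ t s ^ γ) r
          + δ * ρ t r * (A / r ^ (N - 1))
              * ∫ s in (0:ℝ)..r, (ρ t s - Λ) * s ^ (N - 1)
        = κ * deriv (fun s => ρ t s ^ θ) r
              * (((N : ℝ) - 1) / r * V t r + deriv (fun s => V t s) r)
          + κ * ρ t r ^ θ
              * (deriv (deriv (fun s => V t s)) r
                + ((N : ℝ) - 1) / r * deriv (fun s => V t s) r
                - ((N : ℝ) - 1) / r ^ 2 * V t r)) := by
  intro t r hr hrZ
  obtain ⟨n, rfl⟩ : ∃ n, N = n + 2 := ⟨N - 2, by omega⟩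
  have hNpos : (0:ℝ) < ((n + 2 : ℕ) : ℝ) := by positivity
  have hapos : ∀ τ, 0 < a τ := fun τ => by rw [ha]; exact Real.exp_pos _
  have hat := hapos t
  have hane := hat.ne'
  set b := a t with hb
  set z := r / b with hz
  have hz0 : 0 < z := div_pos hr hat
  have hzZ : z < Z := by rw [hz, div_lt_iff₀ hat]; linarith
  have hrz : r = b * z := by rw [hz]; field_simp
  have hq : 0 < δ * A * Λ := by nlinarith
  have hlam2 : lam ^ 2 = δ * A * Λ / ((n + 2 : ℕ) : ℝ) := by
    rw [hlam, Real.sq_sqrt (by positivity)]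
  have hlam0 : 0 ≤ lam := by rw [hlam]; exact Real.sqrt_nonneg _
  have hsq : Real.sqrt (((n + 2 : ℕ) : ℝ) * δ * A * Λ) = ((n + 2 : ℕ) : ℝ) * lam := by
    rw [show ((n + 2 : ℕ) : ℝ) * δ * A * Λ = (((n + 2 : ℕ) : ℝ) * lam) ^ 2 by
      rw [mul_pow, hlam2]; field_simp]
    exact Real.sqrt_sq (by positivity)
  have hfz : 0 < f z := hfpos z ⟨hz0.le, hzZ⟩
  have hfd : HasDerivAt f (deriv f z) z := by
    have h1 : DifferentiableWithinAt ℝ f (Set.Ico 0 Z) z :=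
      hf.differentiableOn (by norm_num) z ⟨hz0.le, hzZ⟩
    exact (h1.differentiableAt (Ico_mem_nhds hz0 hzZ)).hasDerivAt
  have hda : HasDerivAt a (lam * b) t := by
    have h : HasDerivAt (fun τ => Real.exp (lam * τ)) (Real.exp (lam * t) * (lam * 1)) t :=
      ((hasDerivAt_id t).const_mul lam).exp
    have : a = fun τ => Real.exp (lam * τ) := funext ha
    rw [hb, ha t, this]
    convert h using 1
    ring
  have hVr : ∀ t' r', HasDerivAt (fun s => V t' s) lam r' := by
    intro t' r'
    have : (fun s => V t' s) = fun s => lam * s := funext (hV t')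
    rw [this]
    simpa using (hasDerivAt_id r').const_mul lam
  have hVr1 : deriv (fun s => V t s) = fun _ => lam := funext fun r' => (hVr t r').deriv
  have hVrr : deriv (deriv (fun s => V t s)) r = 0 := by rw [hVr1]; simp
  have hVt : deriv (fun τ => V τ r) t = 0 := by
    simp only [hV]; simp
  have hρr : HasDerivAt (fun s => ρ t s) (deriv f z / b ^ (n + 3)) r := by
    have h1 : (fun s => ρ t s) = fun s => f (s / b) / b ^ (n + 2) := funext (hρ t)
    rw [h1]
    have h2 : HasDerivAt (fun s : ℝ => s / b) (1 / b) r := (hasDerivAt_id r).div_const b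
    have h3 : HasDerivAt (fun s => f (s / b)) (deriv f z * (1 / b)) r :=
      HasDerivAt.comp r hfd h2
    refine (h3.div_const (b ^ (n + 2))).congr_deriv ?_
    clear_value z b
    field_simp
    ring
  have hρt : HasDerivAt (fun τ => ρ τ r)
      (-(lam * z * deriv f z) / b ^ (n + 2) - ((n + 2 : ℕ) : ℝ) * lam * f z / b ^ (n + 2)) t := by
    have h1 : (fun τ => ρ τ r) = fun τ => f (r / a τ) / a τ ^ (n + 2) :=
      funext fun τ => hρ τ r
    rw [h1]
    have h2 : HasDerivAt (fun τ => r / a τ) ((0 * a t - r * (lam * b)) / a t ^ 2) t :=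
      (hasDerivAt_const t r).div hda hane
    have h3 : HasDerivAt (fun τ => f (r / a τ)) (deriv f z * _) t :=
      HasDerivAt.comp t hfd h2
    have h4 := h3.div (hda.pow (n + 2)) (pow_ne_zero _ hane)
    refine h4.congr_deriv ?_
    change (deriv f z * ((0 * b - r * (lam * b)) / b ^ 2) * b ^ (n + 2)
      - f z * (((n + 2 : ℕ) : ℝ) * b ^ (n + 1) * (lam * b))) / (b ^ (n + 2)) ^ 2 = _
    clear_value z b
    rw [hrz]
    field_simp
    ring
  have hρv : ρ t r = f z / b ^ (n + 2) := hρ t r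
  have hρpos : 0 < ρ t r := by rw [hρv]; positivity
  have hpow : ∀ p : ℝ, HasDerivAt (fun s => ρ t s ^ p)
      (deriv f z / b ^ (n + 3) * p * ρ t r ^ (p - 1)) r := fun p =>
    hρr.rpow_const (Or.inl hρpos.ne')
  refine ⟨?_, ?_⟩
  · rw [hρt.deriv, hρr.deriv, (hVr t r).deriv, hρv, hV, hrz]
    push_cast
    field_simp
    ring
  · have hcont : ContinuousOn (fun s => ρ t s * s ^ (n + 1)) (Set.uIcc 0 r) := by
      rw [Set.uIcc_of_le hr.le]
      simp only [hρ, ← hb]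
      refine ContinuousOn.mul (ContinuousOn.div_const (hf.continuousOn.comp
        (by fun_prop) ?_) _) (by fun_prop)
      intro s hs
      refine ⟨div_nonneg hs.1 hat.le, ?_⟩
      rw [div_lt_iff₀ hat]
      linarith [hs.2]
    have hI1 : ∫ s in (0:ℝ)..r, ρ t s * s ^ (n + 1) = ∫ s in (0:ℝ)..z, f s * s ^ (n + 1) := by
      have h := intervalIntegral.integral_comp_div (a := 0) (b := r)
        (fun s => f s * s ^ (n + 1)) hane
      have h' : ∀ s, ρ t s * s ^ (n + 1) = b⁻¹ * (f (s / b) * (s / b) ^ (n + 1)) := by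
        intro s
        rw [hρ]
        simp only [← hb]
        rw [div_pow]
        field_simp
        ring
      simp only [h', intervalIntegral.integral_const_mul]
      rw [h, zero_div, smul_eq_mul, ← hz]
      field_simp
    have hI : ∫ s in (0:ℝ)..r, (ρ t s - Λ) * s ^ (n + 1)
        = (∫ s in (0:ℝ)..z, f s * s ^ (n + 1)) - Λ * (r ^ (n + 2) / ((n + 2 : ℕ) : ℝ)) := by
      simp only [sub_mul]
      rw [intervalIntegral.integral_sub hcont.intervalIntegrable
        ((by fun_prop : Continuous fun s : ℝ => Λ * s ^ (n + 1)).intervalIntegrable _ _), hI1,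
        intervalIntegral.integral_const_mul, integral_pow]
      push_cast
      simp
      ring_nf
      simp
    have hode' := hode z ⟨hz0, hzZ⟩
    have hγθ : θ = γ := by rw [hγ, hθ]
    have hrp : ρ t r ^ (γ - 1) = f z ^ (γ - 2) * f z / b ^ n := by
      rw [hρv, Real.div_rpow hfz.le (by positivity)]
      congr 1
      · rw [← Real.rpow_add_one hfz.ne']
        congr 1; ring
      · rw [← Real.rpow_natCast b (n + 2), ← Real.rpow_mul hat.le, ← Real.rpow_natCast b n]
        congr 1
        rw [hγ]
        push_cast
        field_simp
        ring
    rw [show n + 2 - 1 = n + 1 by omega] at *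
    rw [hVt, hVrr, (hVr t r).deriv, ((hpow γ).const_mul K).deriv, hγθ, (hpow γ).deriv, hI, hV,
      hrp]
    rw [hsq, hγθ] at hode'
    set J := ∫ s in (0:ℝ)..z, f s * s ^ (n + 1) with hJ
    set F := f z ^ (γ - 2) with hF
    set D := deriv f z with hD
    have hJ' : δ * A * J = - ((γ * K - κ * γ * (((n + 2 : ℕ) : ℝ) * lam)) * F * D) * z ^ (n + 1) := by
      field_simp at hode'
      linarith
    have hL' : δ * A * Λ = lam ^ 2 * ((n + 2 : ℕ) : ℝ) := by
      rw [hlam2]; field_simp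
    have key : δ * ρ t r * (A / r ^ (n + 1)) * (J - Λ * (r ^ (n + 2) / ((n + 2 : ℕ) : ℝ)))
        = ρ t r / r ^ (n + 1) * (δ * A * J - δ * A * Λ * (r ^ (n + 2) / ((n + 2 : ℕ) : ℝ))) := by
      ring
    rw [key, hJ', hL']
    have hzero : 0 + (((n + 2 : ℕ) : ℝ) - 1) / r * lam - (((n + 2 : ℕ) : ℝ) - 1) / r ^ 2 * (lam * r) = 0 := by
      field_simp
      ring
    rw [hzero, hρv, hrz]
    push_cast
    field_simp
    ring
end
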